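/- If the last PU, PU (k−1), is non-saturated, then the algorithm distributes the entire load: L k = 0, equivalently ∑_{i=0}^{k−1} tw i = n. -/

import Mathlib

theorem stmt_7
    (k : ℕ) (hk : 1 ≤ k) (n : ℝ) (hn : 0 < n)
    (c m : ℕ → ℝ)
    (hc : ∀ i < k, 0 < c i) (hm : ∀ i < k, 0 < m i)
    (S L desW tw : ℕ → ℝ)
    (hS : ∀ i ≤ k, S i = ∑ j ∈ Finset.Ico i k, c j)
    (hL0 : L 0 = n)
    (hdesW : ∀ i < k, desW i = c i * L i / S i)
    (htw : ∀ i < k, tw i = min (desW i) (m i))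
    (hLrec : ∀ i < k, L (i + 1) = L i - tw i)
    (hsorted : ∀ i j, i ≤ j → j < k → c i / m i ≥ c j / m j)
    (hlast_nonsat : desW (k - 1) ≤ m (k - 1)) :
    L k = 0 ∧ ∑ i ∈ Finset.range k, tw i = n := by
  obtain ⟨p, rfl⟩ : ∃ p, k = p + 1 := ⟨k - 1, by omega⟩
  simp only [Nat.add_sub_cancel] at hlast_nonsat
  have hp : p < p + 1 := Nat.lt_succ_self p
  have hSp : S p = c p := by
    rw [hS p hp.le]
    simp
  have hd : desW p = L p := by
    rw [hdesW p hp, hSp]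
    exact mul_div_cancel_left₀ _ (hc p hp).ne'
  have hLk : L (p + 1) = 0 := by
    rw [hLrec p hp, htw p hp, min_eq_left hlast_nonsat, hd, sub_self]
  refine ⟨hLk, ?_⟩
  have hsum : ∀ q ≤ p + 1, ∑ i ∈ Finset.range q, tw i = n - L q := by
    intro q
    induction q with
    | zero => intro _; simp [hL0]
    | succ q ih =>
      intro hq
      rw [Finset.sum_range_succ, ih (by omega), hLrec q (by omega)]
      ring
  rw [hsum (p + 1) le_rfl, hLk, sub_zero]
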